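/- For each p, q ∈ Δ(K): the minimum of d(u,v) over information structures u, v with marg_K u = p and marg_K v = q equals Σ_{k∈K} |p_k − q_k|, and the maximum of d(u,v) over such u, v equals 2·(1 − max_{p',q'∈Δ(K)} Σ_{k∈K} min(p_k·q'_k , p'_k·q_k)). -/

import Mathlib

open scoped BigOperators ENNReal

namespace ValueDistance

/-- An information structure: a probability distribution on `K × ℕ × ℕ`
(state, signal of player 1, signal of player 2). -/
abbrev InfoStruct (K : Type) := PMF (K × ℕ × ℕ)

/-- A behavior strategy / garbling : a map `ℕ → Δ(ℕ)`. -/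
abbrev Garbling : Type := ℕ → PMF ℕ

variable {K : Type}

/-- `g` is a payoff function with action bound `L` : values in `[-1,1]`,
`g k i j = -1` when `i ≥ L`, and `g k i j = 1` when `i < L` and `j ≥ L`. -/
def IsPayoffL (L : ℕ) (g : K → ℕ → ℕ → ℝ) : Prop :=
  (∀ k i j, g k i j ∈ Set.Icc (-1 : ℝ) 1) ∧
  (∀ k i j, L ≤ i → g k i j = -1) ∧
  (∀ k i j, i < L → L ≤ j → g k i j = 1)

/-- `g` belongs to the set `𝒢` of payoff functions. -/
def IsPayoff (g : K → ℕ → ℕ → ℝ) : Prop := ∃ L, IsPayoffL L g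

/-- `g` belongs to the set `𝒢₁` of single-agent (player 1) problems. -/
def IsPayoff1 (g : K → ℕ → ℕ → ℝ) : Prop :=
  IsPayoff g ∧ ∀ k i j j', g k i j = g k i j'

/-- Expected payoff in the Bayesian game `Γ(u,g)` when player 1 uses the behavior
strategy `σ` and player 2 uses `τ`. -/
noncomputable def payoff (u : InfoStruct K) (g : K → ℕ → ℕ → ℝ)
    (σ τ : Garbling) : ℝ :=
  ∑' (x : K × ℕ × ℕ) (i : ℕ) (j : ℕ),
    (u x).toReal * (σ x.2.1 i).toReal * (τ x.2.2 j).toReal * g x.1 i j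

/-- The value `val(u,g)` of the zero-sum Bayesian game `Γ(u,g)`
(the common value of `sup inf` and `inf sup` of the expected payoff;
we take `sup inf` as the definition). -/
noncomputable def val (u : InfoStruct K) (g : K → ℕ → ℕ → ℝ) : ℝ :=
  ⨆ σ : Garbling, ⨅ τ : Garbling, payoff u g σ τ

/-- Total variation distance `‖u − v‖`. -/
noncomputable def tv {α : Type} (u v : PMF α) : ℝ :=
  ∑' x : α, |(u x).toReal - (v x).toReal|

/-- `q.u` : player 1's signal garbled through `q`. -/
noncomputable def garbleLeft (q : Garbling) (u : InfoStruct K) : InfoStruct K :=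
  u.bind (fun x => (q x.2.1).map (fun c => (x.1, c, x.2.2)))

/-- `u.q` : player 2's signal garbled through `q`. -/
noncomputable def garbleRight (u : InfoStruct K) (q : Garbling) : InfoStruct K :=
  u.bind (fun x => (q x.2.2).map (fun d => (x.1, x.2.1, d)))

/-- The value-based distance `d(u,v) = sup_{g ∈ 𝒢} |val(u,g) − val(v,g)|`. -/
noncomputable def dVal (u v : InfoStruct K) : ℝ :=
  ⨆ g : {g : K → ℕ → ℕ → ℝ // IsPayoff g}, |val u g.1 - val v g.1|

/-- The single-agent distance `d₁(u,v) = sup_{g ∈ 𝒢₁} |val(u,g) − val(v,g)|`. -/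
noncomputable def d1 (u v : InfoStruct K) : ℝ :=
  ⨆ g : {g : K → ℕ → ℕ → ℝ // IsPayoff1 g}, |val u g.1 - val v g.1|

/-- Marginal of an information structure on `K × ℕ` (state, player 1's signal). -/
noncomputable def marg1 (u : InfoStruct K) : PMF (K × ℕ) :=
  u.map (fun x => (x.1, x.2.1))

/-- Garbling of a single-agent information structure:
`(q.w)(k,c) = Σ_s w(k,s)·q(s)({c})`. -/
noncomputable def garble1 (q : Garbling) (w : PMF (K × ℕ)) : PMF (K × ℕ) :=
  w.bind (fun x => (q x.2).map (fun c => (x.1, c)))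

/-- Marginal of an information structure on the states. -/
noncomputable def margK (u : InfoStruct K) : PMF K := u.map Prod.fst

/-- Marginal of an information structure on `K × ℕ` (state, player 2's signal). -/
noncomputable def margKD (u : InfoStruct K) : PMF (K × ℕ) :=
  u.map (fun x => (x.1, x.2.2))

/-- `σ.q` : on signal `c`, draw `c'` according to `q(c)` and play `σ(c')`. -/
noncomputable def compGarble (σ q : Garbling) : Garbling :=
  fun c => (q c).bind σ

/-- `u ∈ 𝒰(L)` : both players' signals are `< L` with probability 1. -/
def InU (L : ℕ) (u : InfoStruct K) : Prop :=
  ∀ x : K × ℕ × ℕ, u x ≠ 0 → x.2.1 < L ∧ x.2.2 < L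

/-- `q ∈ 𝒬(L)` : garbling with values supported on `{0,…,L−1}`. -/
def GarblingIn (L : ℕ) (q : Garbling) : Prop :=
  ∀ n m, q n m ≠ 0 → m < L

/-- The two players' signals are conditionally independent given the state:
`u(k)·u(k,c,d) = u(k,c)·u(k,d)` for all `k, c, d`
(equivalently `u(c,d|k) = u(c|k)·u(d|k)` whenever `u(k) > 0`). -/
def CondIndep (u : InfoStruct K) : Prop :=
  ∀ (k : K) (c d : ℕ),
    (∑' y : ℕ × ℕ, u (k, y)) * u (k, c, d)
      = (∑' d' : ℕ, u (k, c, d')) * (∑' c' : ℕ, u (k, c', d))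

end ValueDistance

namespace ValueDistance

/-! A payoff depending on the state alone, with values `sign (p_k - q_k)`, separates `u` from `v` by
`Σ_k |p_k - q_k|`, and uninformative structures are not further apart than that.

For the maximum, the extremal pair gives all the information to player 1 in `u` and to player 2 in
`v`. The players guess the state and bet on it: if the stakes `t_k` satisfy `p_k (1 - t_k) ≤ 2α` and
`q_k (1 + t_k) ≤ 2β`, the values in `u` and `v` differ by at least `2 (1 - α - β)`. Such stakes
exist as soon as `p_k q_k ≤ α q_k + β p_k` for all `k`, and by linear programming duality the least
`α + β` for which this has a solution `α, β ≥ 0` is `max Σ_k min(p_k q'_k, p'_k q_k)`. Conversely,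
in arbitrary `u` and `v` the players can copy their behavior from the other game at an imagined
state drawn from an optimal `p'` or `q'`. -/

section Expectation

open Filter Topology

variable {α β : Type*} {C D : ℝ}

/-- The expectation `E_μ f` of a real function under a discrete distribution. It is only used for
bounded `f`, where the series converges. -/
noncomputable def expect (μ : PMF α) (f : α → ℝ) : ℝ := ∑' x, (μ x).toReal * f x

lemma summable_toReal (μ : PMF α) : Summable fun x => (μ x).toReal :=
  ENNReal.summable_toReal μ.tsum_coe_ne_top

lemma tsum_toReal (μ : PMF α) : ∑' x, (μ x).toReal = 1 := by
  rw [← ENNReal.tsum_toReal_eq μ.apply_ne_top, μ.tsum_coe, ENNReal.toReal_one]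

lemma toReal_apply_le_one (μ : PMF α) (a : α) : (μ a).toReal ≤ 1 :=
  ENNReal.toReal_mono ENNReal.one_ne_top (μ.coe_le_one a)

lemma summable_toReal_mul (μ : PMF α) {f : α → ℝ} (hf : ∀ x, |f x| ≤ C) :
    Summable fun x => (μ x).toReal * f x := by
  refine .of_norm_bounded ((summable_toReal μ).mul_right C) fun x => ?_
  rw [Real.norm_eq_abs, abs_mul, abs_of_nonneg ENNReal.toReal_nonneg]
  gcongr
  exact hf x

@[simp]
lemma expect_const (μ : PMF α) (c : ℝ) : expect μ (fun _ => c) = c := by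
  rw [expect, tsum_mul_right, tsum_toReal, one_mul]

lemma expect_neg (μ : PMF α) (f : α → ℝ) : expect μ (fun x => -f x) = -expect μ f := by
  simp only [expect, mul_neg, tsum_neg]

lemma expect_add (μ : PMF α) {f h : α → ℝ} (hf : ∀ x, |f x| ≤ C) (hh : ∀ x, |h x| ≤ D) :
    expect μ (fun x => f x + h x) = expect μ f + expect μ h := by
  simp only [expect, mul_add]
  exact (summable_toReal_mul μ hf).tsum_add (summable_toReal_mul μ hh)

lemma expect_sub (μ : PMF α) {f h : α → ℝ} (hf : ∀ x, |f x| ≤ C) (hh : ∀ x, |h x| ≤ D) :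
    expect μ (fun x => f x - h x) = expect μ f - expect μ h := by
  simp only [expect, mul_sub]
  exact (summable_toReal_mul μ hf).tsum_sub (summable_toReal_mul μ hh)

lemma expect_const_sub (μ : PMF α) (c : ℝ) {f : α → ℝ} (hf : ∀ x, |f x| ≤ C) :
    expect μ (fun x => c - f x) = c - expect μ f := by
  rw [expect_sub μ (fun _ => le_rfl) hf, expect_const]

lemma expect_const_add (μ : PMF α) (c : ℝ) {f : α → ℝ} (hf : ∀ x, |f x| ≤ C) :
    expect μ (fun x => c + f x) = c + expect μ f := by
  rw [expect_add μ (fun _ => le_rfl) hf, expect_const]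

lemma expect_mono (μ : PMF α) {f h : α → ℝ} (hf : ∀ x, |f x| ≤ C) (hh : ∀ x, |h x| ≤ D)
    (hfh : ∀ x, f x ≤ h x) : expect μ f ≤ expect μ h :=
  (summable_toReal_mul μ hf).tsum_le_tsum
    (fun x => mul_le_mul_of_nonneg_left (hfh x) ENNReal.toReal_nonneg) (summable_toReal_mul μ hh)

lemma expect_le (μ : PMF α) {f : α → ℝ} (hf : ∀ x, |f x| ≤ C) {c : ℝ} (h : ∀ x, f x ≤ c) :
    expect μ f ≤ c :=
  (expect_mono μ hf (fun _ => le_rfl) h).trans_eq (expect_const μ c)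

lemma le_expect (μ : PMF α) {f : α → ℝ} (hf : ∀ x, |f x| ≤ C) {c : ℝ} (h : ∀ x, c ≤ f x) :
    c ≤ expect μ f :=
  (expect_const μ c).symm.trans_le (expect_mono μ (fun _ => le_rfl) hf h)

lemma abs_expect_le (μ : PMF α) {f : α → ℝ} (hf : ∀ x, |f x| ≤ C) : |expect μ f| ≤ C :=
  abs_le.2 ⟨le_expect μ hf fun x => neg_le_of_abs_le (hf x),
    expect_le μ hf fun x => le_of_abs_le (hf x)⟩

lemma toReal_mul_le_expect (μ : PMF α) {f : α → ℝ} (hf : ∀ x, |f x| ≤ C) (h0 : ∀ x, 0 ≤ f x)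
    (a : α) : (μ a).toReal * f a ≤ expect μ f :=
  (summable_toReal_mul μ hf).le_tsum a fun x _ => mul_nonneg ENNReal.toReal_nonneg (h0 x)

lemma abs_one_sub_le_two {x : ℝ} (hx : |x| ≤ 1) : |1 - x| ≤ 2 :=
  (abs_sub _ _).trans (by rw [abs_one]; linarith)

lemma abs_one_add_le_two {x : ℝ} (hx : |x| ≤ 1) : |1 + x| ≤ 2 :=
  sub_neg_eq_add 1 x ▸ abs_one_sub_le_two ((abs_neg x).trans_le hx)

lemma abs_toReal_mul_le (μ : PMF α) {x : ℝ} (hx : |x| ≤ C) (a : α) : |(μ a).toReal * x| ≤ C := by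
  rw [abs_mul, abs_of_nonneg ENNReal.toReal_nonneg]
  exact (mul_le_of_le_one_left (abs_nonneg x) (toReal_apply_le_one μ a)).trans hx

lemma toReal_mul_le_one_sub_expect (μ : PMF α) {f : α → ℝ} (hf : ∀ x, |f x| ≤ 1) (a : α) :
    (μ a).toReal * (1 - f a) ≤ 1 - expect μ f := by
  rw [← expect_const_sub μ 1 hf]
  exact toReal_mul_le_expect μ (fun x => abs_one_sub_le_two (hf x))
    (fun x => sub_nonneg.2 (le_of_abs_le (hf x))) a

lemma expect_expect_le_one_sub (μ ν : PMF α) {f : α → α → ℝ} (hf : ∀ x y, |f x y| ≤ 1) :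
    expect μ (fun x => expect ν (f x)) ≤
      1 - expect μ fun x => (ν x).toReal * (1 - f x x) := by
  have hdiag (x : α) : |(ν x).toReal * (1 - f x x)| ≤ 2 :=
    abs_toReal_mul_le ν (abs_one_sub_le_two (hf x x)) x
  rw [← expect_const_sub μ 1 hdiag]
  exact expect_mono μ (fun x => abs_expect_le ν (hf x))
    (fun x => (abs_sub _ _).trans (add_le_add le_rfl (hdiag x)))
    fun x => le_sub_comm.1 (toReal_mul_le_one_sub_expect ν (hf x) x)

lemma neg_one_add_le_expect_expect (μ ν : PMF α) {f : α → α → ℝ} (hf : ∀ x y, |f x y| ≤ 1) :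
    -1 + expect μ (fun x => (ν x).toReal * (1 + f x x)) ≤ expect μ fun x => expect ν (f x) := by
  have h := expect_expect_le_one_sub μ ν (f := fun x y => -f x y) fun x y => by
    rw [abs_neg]
    exact hf x y
  simp only [expect_neg, sub_neg_eq_add] at h
  linarith

lemma expect_ite_eq_le {ι : α → β} [DecidableEq β] (hι : Function.Injective ι) (μ : PMF α)
    {f : α → ℝ} {c : ℝ} (hc : 0 ≤ c) (hf : ∀ x, (μ x).toReal * f x ≤ c) (b : β) :
    expect μ (fun x => if ι x = b then f x else 0) ≤ c := by
  by_cases hb : ∃ a, ι a = b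
  · obtain ⟨a, rfl⟩ := hb
    rw [expect, tsum_eq_single a fun x hx => by rw [if_neg (hι.ne hx), mul_zero], if_pos rfl]
    exact hf a
  · simp only [not_exists.1 hb, if_false, expect_const, hc]

@[simp]
lemma expect_pure (a : α) (f : α → ℝ) : expect (PMF.pure a) f = f a := by
  rw [expect, tsum_eq_single a fun b hb => by simp [PMF.pure_apply, hb]]
  simp

lemma summable_toReal_mul_toReal_mul (μ : PMF α) (κ : α → PMF β) {f : α → β → ℝ}
    (hf : ∀ x y, |f x y| ≤ C) :
    Summable (Function.uncurry fun x y => (μ x).toReal * ((κ x y).toReal * f x y)) := by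
  have hμκ : Summable fun z : α × β => (μ z.1 * κ z.1 z.2).toReal := by
    refine ENNReal.summable_toReal ?_
    rw [ENNReal.tsum_prod (f := fun a b => μ a * κ a b)]
    simp [ENNReal.tsum_mul_left]
  refine .of_norm_bounded (hμκ.mul_right C) fun z => ?_
  rw [Function.uncurry, Real.norm_eq_abs, ← mul_assoc, abs_mul, ENNReal.toReal_mul,
    abs_of_nonneg (by positivity)]
  gcongr
  exact hf _ _

lemma expect_comm (μ : PMF α) (ν : PMF β) {f : α → β → ℝ} (hf : ∀ x y, |f x y| ≤ C) :
    expect μ (fun x => expect ν (f x)) = expect ν (fun y => expect μ (fun x => f x y)) := by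
  simp only [expect, ← tsum_mul_left]
  rw [← (summable_toReal_mul_toReal_mul μ (fun _ => ν) hf).tsum_comm]
  simp only [mul_left_comm]

lemma expect_bind (μ : PMF α) (κ : α → PMF β) {f : β → ℝ} (hf : ∀ y, |f y| ≤ C) :
    expect (μ.bind κ) f = expect μ (fun x => expect (κ x) f) := by
  simp only [expect, ← tsum_mul_left]
  rw [← (summable_toReal_mul_toReal_mul μ κ fun _ => hf).tsum_comm]
  refine tsum_congr fun y => ?_
  simp only [← mul_assoc]
  rw [tsum_mul_right, PMF.bind_apply, ENNReal.tsum_toReal_eq fun x =>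
    ENNReal.mul_ne_top (μ.apply_ne_top x) ((κ x).apply_ne_top y)]
  simp only [ENNReal.toReal_mul]

lemma expect_map (μ : PMF α) (h : α → β) {f : β → ℝ} (hf : ∀ y, |f y| ≤ C) :
    expect (μ.map h) f = expect μ (fun x => f (h x)) := by
  rw [PMF.map, expect_bind _ _ hf]
  simp only [Function.comp_apply, expect_pure]

lemma tendsto_expect {ι : Type*} {l : Filter ι} (μ : PMF α) {F : ι → α → ℝ} {f : α → ℝ}
    (hF : ∀ n x, |F n x| ≤ C) (hlim : ∀ x, Tendsto (fun n => F n x) l (𝓝 (f x))) :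
    Tendsto (fun n => expect μ (F n)) l (𝓝 (expect μ f)) := by
  refine tendsto_tsum_of_dominated_convergence ((summable_toReal μ).mul_right C)
    (fun x => (hlim x).const_mul _) (.of_forall fun n x => ?_)
  rw [Real.norm_eq_abs, abs_mul, abs_of_nonneg ENNReal.toReal_nonneg]
  gcongr
  exact hF n x

lemma map_fst_apply (μ : PMF (α × β)) (a : α) : μ.map Prod.fst a = ∑' b, μ (a, b) := by
  classical
  rw [PMF.map_apply, ENNReal.tsum_prod (f := fun x y => if a = x then μ (x, y) else 0),
    tsum_eq_single a fun x hx => by simp [hx.symm]]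
  simp

lemma exists_conditional (μ : PMF (α × β)) :
    ∃ κ : α → PMF β, ∀ a b, μ (a, b) = μ.map Prod.fst a * κ a b := by
  obtain ⟨z, -⟩ := μ.support_nonempty
  suffices h : ∀ a, ∃ ν : PMF β, ∀ b, μ (a, b) = μ.map Prod.fst a * ν b from
    ⟨fun a => (h a).choose, fun a => (h a).choose_spec⟩
  intro a
  by_cases ha : μ.map Prod.fst a = 0
  · refine ⟨PMF.pure z.2, fun b => ?_⟩
    rw [ha, zero_mul]
    rw [map_fst_apply, ENNReal.tsum_eq_zero] at ha
    exact ha b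
  · have htop := (μ.map Prod.fst).apply_ne_top a
    refine ⟨PMF.normalize (fun b => μ (a, b)) (map_fst_apply μ a ▸ ha)
      (map_fst_apply μ a ▸ htop), fun b => ?_⟩
    rw [PMF.normalize_apply, ← map_fst_apply, mul_comm, mul_assoc, ENNReal.inv_mul_cancel ha htop,
      mul_one]

lemma exists_expect_eq_expect_map_fst (μ : PMF (α × β)) :
    ∃ κ : α → PMF β, ∀ {f : α × β → ℝ}, (∀ z, |f z| ≤ C) →
      expect μ f = expect (μ.map Prod.fst) fun a => expect (κ a) fun b => f (a, b) := by
  obtain ⟨κ, hκ⟩ := exists_conditional μ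
  refine ⟨κ, fun hf => ?_⟩
  simp only [expect, ← tsum_mul_left]
  rw [(summable_toReal_mul μ hf).tsum_prod]
  simp only [hκ, ENNReal.toReal_mul, mul_assoc]

/-- The expected payoff of the matrix game `g` when the players choose their actions independently
according to `a` and `b`. -/
noncomputable def mixedPayoff (g : α → β → ℝ) (a : PMF α) (b : PMF β) : ℝ :=
  expect a fun i => expect b (g i)

variable {g : α → β → ℝ}

lemma abs_mixedPayoff_le (hg : ∀ i j, |g i j| ≤ C) (a : PMF α) (b : PMF β) :
    |mixedPayoff g a b| ≤ C :=
  abs_expect_le a fun i => abs_expect_le b (hg i)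

lemma mixedPayoff_bind_left (hg : ∀ i j, |g i j| ≤ C) {γ : Type*} (μ : PMF γ) (κ : γ → PMF α)
    (b : PMF β) :
    mixedPayoff g (μ.bind κ) b = expect μ fun x => mixedPayoff g (κ x) b :=
  expect_bind μ κ fun i => abs_expect_le b (hg i)

lemma mixedPayoff_bind_right (hg : ∀ i j, |g i j| ≤ C) {γ : Type*} (a : PMF α) (μ : PMF γ)
    (κ : γ → PMF β) :
    mixedPayoff g a (μ.bind κ) = expect μ fun x => mixedPayoff g a (κ x) := by
  simp only [mixedPayoff, expect_bind μ κ (hg _)]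
  exact expect_comm a μ fun i x => abs_expect_le (κ x) (hg i)

end Expectation

section Value

variable {K : Type} {g : K → ℕ → ℕ → ℝ}

lemma IsPayoff.abs_apply_le (hg : IsPayoff g) (k : K) (i j : ℕ) : |g k i j| ≤ 1 :=
  let ⟨_, h, _⟩ := hg
  _root_.abs_le.2 (h k i j)

lemma IsPayoff.abs_mixedPayoff_le (hg : IsPayoff g) (k : K) (a b : PMF ℕ) :
    |mixedPayoff (g k) a b| ≤ 1 :=
  ValueDistance.abs_mixedPayoff_le (hg.abs_apply_le k) a b

lemma payoff_eq_expect (u : InfoStruct K) (g : K → ℕ → ℕ → ℝ) (σ τ : Garbling) :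
    payoff u g σ τ = expect u fun x => mixedPayoff (g x.1) (σ x.2.1) (τ x.2.2) := by
  simp only [payoff, mixedPayoff, expect, ← tsum_mul_left, mul_assoc]

lemma abs_payoff_le (u : InfoStruct K) (hg : IsPayoff g) (σ τ : Garbling) :
    |payoff u g σ τ| ≤ 1 := by
  rw [payoff_eq_expect]
  exact abs_expect_le u fun x => hg.abs_mixedPayoff_le _ _ _

lemma bddBelow_range_payoff (u : InfoStruct K) (hg : IsPayoff g) (σ : Garbling) :
    BddBelow (Set.range (payoff u g σ)) :=
  ⟨-1, Set.forall_mem_range.2 fun τ => neg_le_of_abs_le (abs_payoff_le u hg σ τ)⟩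

lemma bddAbove_range_iInf_payoff (u : InfoStruct K) (hg : IsPayoff g) :
    BddAbove (Set.range fun σ => ⨅ τ, payoff u g σ τ) :=
  ⟨1, Set.forall_mem_range.2 fun σ =>
    ciInf_le_of_le (bddBelow_range_payoff u hg σ) σ (le_of_abs_le (abs_payoff_le u hg σ σ))⟩

lemma le_val (u : InfoStruct K) (hg : IsPayoff g) (σ : Garbling) {c : ℝ}
    (h : ∀ τ, c ≤ payoff u g σ τ) : c ≤ val u g :=
  le_ciSup_of_le (bddAbove_range_iInf_payoff u hg) σ (le_ciInf h)

lemma val_le (u : InfoStruct K) (hg : IsPayoff g) {c : ℝ} (h : ∀ σ, ∃ τ, payoff u g σ τ ≤ c) :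
    val u g ≤ c :=
  ciSup_le fun σ =>
    let ⟨τ, hτ⟩ := h σ
    ciInf_le_of_le (bddBelow_range_payoff u hg σ) τ hτ

lemma abs_val_le (u : InfoStruct K) (hg : IsPayoff g) : |val u g| ≤ 1 :=
  abs_le.2 ⟨le_val u hg default fun τ => neg_le_of_abs_le (abs_payoff_le u hg _ τ),
    val_le u hg fun σ => ⟨σ, le_of_abs_le (abs_payoff_le u hg _ _)⟩⟩

lemma val_sub_val_le {u v : InfoStruct K} (hg : IsPayoff g) {c : ℝ}
    (h : ∀ σ, ∃ σ', ∀ τ, ∃ τ', payoff u g σ τ' - payoff v g σ' τ ≤ c) :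
    val u g - val v g ≤ c := by
  rw [sub_le_iff_le_add]
  refine ciSup_le fun σ => ?_
  obtain ⟨σ', h⟩ := h σ
  rw [← sub_le_iff_le_add']
  refine le_val v hg σ' fun τ => ?_
  obtain ⟨τ', h⟩ := h τ
  linarith [ciInf_le (bddBelow_range_payoff u hg σ) τ']

lemma val_sub_val_le_dVal (u v : InfoStruct K) (hg : IsPayoff g) :
    val u g - val v g ≤ dVal u v := by
  have hbdd : BddAbove (Set.range fun g : {g : K → ℕ → ℕ → ℝ // IsPayoff g} =>
      |val u g.1 - val v g.1|) :=
    ⟨1 + 1, Set.forall_mem_range.2 fun g =>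
      (abs_sub _ _).trans (add_le_add (abs_val_le u g.2) (abs_val_le v g.2))⟩
  exact (le_abs_self _).trans (le_ciSup hbdd ⟨g, hg⟩)

lemma dVal_le {u v : InfoStruct K} {c : ℝ}
    (h : ∀ g : K → ℕ → ℕ → ℝ, IsPayoff g → |val u g - val v g| ≤ c) : dVal u v ≤ c := by
  have : Nonempty {g : K → ℕ → ℕ → ℝ // IsPayoff g} :=
    ⟨⟨fun _ _ _ => -1, 0, by simp, by simp, by simp⟩⟩
  exact ciSup_le fun g => h g.1 g.2

lemma expect_margK (u : InfoStruct K) {f : K → ℝ} {C : ℝ} (hf : ∀ k, |f k| ≤ C) :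
    expect (margK u) f = expect u fun x => f x.1 :=
  expect_map u Prod.fst hf

lemma exists_payoff_const_right_eq (u : InfoStruct K) (σ : Garbling) :
    ∃ a : K → PMF ℕ, ∀ {g : K → ℕ → ℕ → ℝ}, IsPayoff g → ∀ b : PMF ℕ,
      payoff u g σ (fun _ => b) = expect (margK u) fun k => mixedPayoff (g k) (a k) b := by
  obtain ⟨κ, hκ⟩ := exists_expect_eq_expect_map_fst u
  refine ⟨fun k => (κ k).bind fun y => σ y.1, fun {g} hg b => ?_⟩
  rw [payoff_eq_expect, hκ fun x => hg.abs_mixedPayoff_le _ _ _]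
  simp only [mixedPayoff_bind_left (hg.abs_apply_le _), margK]

lemma exists_payoff_const_left_eq (u : InfoStruct K) (τ : Garbling) :
    ∃ b : K → PMF ℕ, ∀ {g : K → ℕ → ℕ → ℝ}, IsPayoff g → ∀ a : PMF ℕ,
      payoff u g (fun _ => a) τ = expect (margK u) fun k => mixedPayoff (g k) a (b k) := by
  obtain ⟨κ, hκ⟩ := exists_expect_eq_expect_map_fst u
  refine ⟨fun k => (κ k).bind fun y => τ y.2, fun {g} hg a => ?_⟩
  rw [payoff_eq_expect, hκ fun x => hg.abs_mixedPayoff_le _ _ _]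
  simp only [mixedPayoff_bind_right (hg.abs_apply_le _), margK]

/-- The information structure with prior `p` in which state `k` sends the signal `c k` to player 1
and `d k` to player 2; a constant signal reveals nothing, an injective one reveals the state. -/
noncomputable def deterministicSignals (p : PMF K) (c d : K → ℕ) : InfoStruct K :=
  p.map fun k => (k, c k, d k)

@[simp]
lemma margK_deterministicSignals (p : PMF K) (c d : K → ℕ) :
    margK (deterministicSignals p c d) = p := by
  rw [margK, deterministicSignals, PMF.map_comp]
  exact PMF.map_id p

lemma payoff_deterministicSignals (p : PMF K) (c d : K → ℕ) (hg : IsPayoff g) (σ τ : Garbling) :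
    payoff (deterministicSignals p c d) g σ τ =
      expect p fun k => mixedPayoff (g k) (σ (c k)) (τ (d k)) := by
  rw [payoff_eq_expect, deterministicSignals, expect_map _ _ fun x => hg.abs_mixedPayoff_le _ _ _]

end Value

section GuessingGame

variable {K : Type} {N : ℕ} {ι : K → ℕ} {t : K → ℝ}

/-- The game in which both players try to guess the label `ι k` of the state with a number below
`N`. Player 1 loses if he misses it, player 2 loses if only he misses it, and player 1 receives
`t k` if both find it. The actions from `N` on are those forbidden by the definition of `𝒢`. -/
noncomputable def guessingGame (N : ℕ) (ι : K → ℕ) (t : K → ℝ) (k : K) (i j : ℕ) : ℝ :=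
  if N ≤ i then -1 else if N ≤ j then 1 else if ι k ≠ i then -1 else if ι k ≠ j then 1 else t k

lemma isPayoff_guessingGame (ht : ∀ k, |t k| ≤ 1) : IsPayoff (guessingGame N ι t) := by
  refine ⟨N, fun k i j => ?_, fun k i j hi => if_pos hi, fun k i j hi hj => ?_⟩
  · unfold guessingGame
    split_ifs
    all_goals first | exact abs_le.1 (ht k) | norm_num
  · rw [guessingGame, if_neg hi.not_ge, if_pos hj]

lemma le_guessingGame (ht : ∀ k, |t k| ≤ 1) (k : K) (j : ℕ) :
    1 - (if ι k = j then 1 - t k else 0) - (if N ≤ ι k then 2 else 0) ≤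
      guessingGame N ι t k (ι k) j := by
  have := abs_le.1 (ht k)
  unfold guessingGame
  split_ifs <;> grind

lemma guessingGame_le (ht : ∀ k, |t k| ≤ 1) (k : K) (i : ℕ) :
    guessingGame N ι t k i (ι k) ≤
      -1 + (if ι k = i then 1 + t k else 0) + (if N ≤ ι k then 2 else 0) := by
  have := abs_le.1 (ht k)
  unfold guessingGame
  split_ifs <;> grind

lemma le_val_guessingGame (hι : Function.Injective ι) (ht : ∀ k, |t k| ≤ 1) (p : PMF K)
    {a : ℝ} (ha : 0 ≤ a) (h : ∀ k, (p k).toReal * (1 - t k) ≤ a) :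
    1 - a - expect p (fun k => if N ≤ ι k then 2 else 0) ≤
      val (deterministicSignals p ι fun _ => 0) (guessingGame N ι t) := by
  have hg : IsPayoff (guessingGame N ι t) := isPayoff_guessingGame ht
  have hguess (j : ℕ) (k : K) : |if ι k = j then 1 - t k else 0| ≤ 2 := by
    split_ifs
    exacts [abs_one_sub_le_two (ht k), by simp]
  have htail (k : K) : |if N ≤ ι k then (2 : ℝ) else 0| ≤ 2 := by split_ifs <;> norm_num
  refine le_val _ hg PMF.pure fun τ => ?_
  rw [payoff_deterministicSignals _ _ _ hg]
  simp only [mixedPayoff, expect_pure]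
  rw [expect_comm _ _ fun k j => hg.abs_apply_le _ _ _]
  refine le_expect _ (fun j => abs_expect_le p fun k => hg.abs_apply_le _ _ _) fun j => ?_
  have hsub (k : K) : |1 - if ι k = j then 1 - t k else 0| ≤ 1 + 2 :=
    (abs_sub _ _).trans (add_le_add abs_one.le (hguess j k))
  calc 1 - a - expect p (fun k => if N ≤ ι k then 2 else 0)
      ≤ 1 - expect p (fun k => if ι k = j then 1 - t k else 0) -
          expect p (fun k => if N ≤ ι k then 2 else 0) := by
        gcongr
        exact expect_ite_eq_le hι p ha h j
    _ = expect p (fun k => 1 - (if ι k = j then 1 - t k else 0) - if N ≤ ι k then 2 else 0) := by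
        rw [expect_sub p hsub htail, expect_const_sub p 1 (hguess j)]
    _ ≤ expect p (fun k => guessingGame N ι t k (ι k) j) :=
        expect_mono p (fun k => (abs_sub _ _).trans (add_le_add (hsub k) (htail k)))
          (fun k => hg.abs_apply_le _ _ _) fun k => le_guessingGame ht k j

lemma val_guessingGame_le (hι : Function.Injective ι) (ht : ∀ k, |t k| ≤ 1) (q : PMF K)
    {b : ℝ} (hb : 0 ≤ b) (h : ∀ k, (q k).toReal * (1 + t k) ≤ b) :
    val (deterministicSignals q (fun _ => 0) ι) (guessingGame N ι t) ≤
      -1 + b + expect q (fun k => if N ≤ ι k then 2 else 0) := by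
  have hg : IsPayoff (guessingGame N ι t) := isPayoff_guessingGame ht
  have hguess (i : ℕ) (k : K) : |if ι k = i then 1 + t k else 0| ≤ 2 := by
    split_ifs
    exacts [abs_one_add_le_two (ht k), by simp]
  have htail (k : K) : |if N ≤ ι k then (2 : ℝ) else 0| ≤ 2 := by split_ifs <;> norm_num
  refine val_le _ hg fun σ => ⟨PMF.pure, ?_⟩
  rw [payoff_deterministicSignals _ _ _ hg]
  simp only [mixedPayoff, expect_pure]
  rw [expect_comm _ _ fun k i => hg.abs_apply_le _ _ _]
  refine expect_le _ (fun i => abs_expect_le q fun k => hg.abs_apply_le _ _ _) fun i => ?_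
  have hadd (k : K) : |-1 + if ι k = i then 1 + t k else 0| ≤ 1 + 2 :=
    (abs_add_le _ _).trans (add_le_add (by simp) (hguess i k))
  calc expect q (fun k => guessingGame N ι t k i (ι k))
      ≤ expect q (fun k => -1 + (if ι k = i then 1 + t k else 0) + if N ≤ ι k then 2 else 0) :=
        expect_mono q (fun k => hg.abs_apply_le _ _ _)
          (fun k => (abs_add_le _ _).trans (add_le_add (hadd k) (htail k)))
          fun k => guessingGame_le ht k i
    _ = -1 + expect q (fun k => if ι k = i then 1 + t k else 0) +
          expect q (fun k => if N ≤ ι k then 2 else 0) := by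
        rw [expect_add q hadd htail, expect_const_add q (-1) (hguess i)]
    _ ≤ -1 + b + expect q (fun k => if N ≤ ι k then 2 else 0) := by
        gcongr
        exact expect_ite_eq_le hι q hb h i

end GuessingGame

section TotalVariation

variable {K : Type}

lemma summable_abs_toReal_sub (p q : PMF K) : Summable fun k => |(p k).toReal - (q k).toReal| :=
  ((summable_toReal p).sub (summable_toReal q)).abs

lemma abs_expect_sub_expect_le (p q : PMF K) {f : K → ℝ} {C : ℝ} (hf : ∀ k, |f k| ≤ C) :
    |expect p f - expect q f| ≤ tv p q * C := by
  have hle (k : K) : ‖(p k).toReal * f k - (q k).toReal * f k‖ ≤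
      |(p k).toReal - (q k).toReal| * C := by
    rw [Real.norm_eq_abs, ← sub_mul, abs_mul]
    gcongr
    exact hf k
  rw [expect, expect, ← (summable_toReal_mul p hf).tsum_sub (summable_toReal_mul q hf), tv,
    ← tsum_mul_right]
  exact tsum_of_norm_bounded ((summable_abs_toReal_sub p q).mul_right C).hasSum hle

lemma exists_expect_sub_expect_eq_tv (p q : PMF K) :
    ∃ s : K → ℝ, (∀ k, |s k| ≤ 1) ∧ expect p s - expect q s = tv p q := by
  have hs (k : K) : |(SignType.sign ((p k).toReal - (q k).toReal) : ℝ)| ≤ 1 := by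
    cases SignType.sign ((p k).toReal - (q k).toReal) <;> simp
  refine ⟨_, hs, ?_⟩
  rw [expect, expect, ← (summable_toReal_mul p hs).tsum_sub (summable_toReal_mul q hs), tv]
  simp only [← sub_mul, self_mul_sign]

/-- With a single admissible action, player 1 guarantees `E_{margK u} s` in `u` and player 2
guarantees `E_{margK v} s` in `v`. -/
theorem tv_margK_le_dVal (u v : InfoStruct K) : tv (margK u) (margK v) ≤ dVal u v := by
  obtain ⟨s, hs, hsum⟩ := exists_expect_sub_expect_eq_tv (margK u) (margK v)
  set g := guessingGame 1 (fun _ => 0) s with hgdef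
  have hg : IsPayoff g := isPayoff_guessingGame hs
  have hu : expect (margK u) s ≤ val u g := by
    refine le_val u hg (fun _ => PMF.pure 0) fun τ => ?_
    rw [expect_margK u hs, payoff_eq_expect]
    refine expect_mono u (fun x => hs x.1) (fun x => hg.abs_mixedPayoff_le _ _ _) fun x => ?_
    rw [mixedPayoff, expect_pure]
    refine le_expect _ (hg.abs_apply_le x.1 0) fun j => ?_
    have := le_of_abs_le (hs x.1)
    simp only [hgdef, guessingGame]
    split_ifs <;> grind
  have hv : val v g ≤ expect (margK v) s := by
    refine val_le v hg fun σ => ⟨fun _ => PMF.pure 0, ?_⟩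
    rw [expect_margK v hs, payoff_eq_expect]
    refine expect_mono v (fun x => hg.abs_mixedPayoff_le _ _ _) (fun x => hs x.1) fun x => ?_
    simp only [mixedPayoff, expect_pure]
    refine expect_le _ (fun i => hg.abs_apply_le x.1 i 0) fun i => ?_
    have := neg_le_of_abs_le (hs x.1)
    simp only [hgdef, guessingGame]
    split_ifs <;> grind
  linarith [val_sub_val_le_dVal u v hg]

theorem dVal_deterministicSignals_le_tv (p q : PMF K) (c d : K → ℕ) :
    dVal (deterministicSignals p c d) (deterministicSignals q c d) ≤ tv p q := by
  refine dVal_le fun g hg => ?_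
  have hpayoff (σ τ : Garbling) : |payoff (deterministicSignals p c d) g σ τ -
      payoff (deterministicSignals q c d) g σ τ| ≤ tv p q := by
    rw [payoff_deterministicSignals p c d hg, payoff_deterministicSignals q c d hg]
    simpa using abs_expect_sub_expect_le p q fun k => hg.abs_mixedPayoff_le k (σ (c k)) (τ (d k))
  exact abs_sub_le_iff.2
    ⟨val_sub_val_le hg fun σ => ⟨σ, fun τ => ⟨τ, (abs_sub_le_iff.1 (hpayoff σ τ)).1⟩⟩,
      val_sub_val_le hg fun σ => ⟨σ, fun τ => ⟨τ, (abs_sub_le_iff.1 (hpayoff σ τ)).2⟩⟩⟩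

end TotalVariation

section Overlap

variable {K : Type*}

/-- The quantity `Σ_k min(p_k q'_k, p'_k q_k)` whose maximum over `p'` and `q'` determines the
diameter. -/
noncomputable def overlap (p q p' q' : PMF K) : ℝ :=
  ∑' k, min ((p k).toReal * (q' k).toReal) ((p' k).toReal * (q k).toReal)

lemma overlap_term_nonneg (p q p' q' : PMF K) (k : K) :
    0 ≤ min ((p k).toReal * (q' k).toReal) ((p' k).toReal * (q k).toReal) := by
  positivity

lemma overlap_term_le (p q p' q' : PMF K) (k : K) :
    min ((p k).toReal * (q' k).toReal) ((p' k).toReal * (q k).toReal) ≤ (p k).toReal :=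
  (min_le_left _ _).trans (mul_le_of_le_one_right ENNReal.toReal_nonneg (toReal_apply_le_one q' k))

lemma summable_overlap (p q p' q' : PMF K) :
    Summable fun k => min ((p k).toReal * (q' k).toReal) ((p' k).toReal * (q k).toReal) :=
  .of_nonneg_of_le (overlap_term_nonneg p q p' q') (overlap_term_le p q p' q') (summable_toReal p)

lemma overlap_nonneg (p q p' q' : PMF K) : 0 ≤ overlap p q p' q' :=
  tsum_nonneg (overlap_term_nonneg p q p' q')

lemma overlap_le_one (p q p' q' : PMF K) : overlap p q p' q' ≤ 1 :=
  ((summable_overlap p q p' q').tsum_le_tsum (overlap_term_le p q p' q')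
    (summable_toReal p)).trans_eq (tsum_toReal p)

lemma overlap_comm (p q p' q' : PMF K) : overlap p q p' q' = overlap q p q' p' := by
  simp only [overlap, min_comm, mul_comm]

lemma overlap_le_iSup (p q p' q' : PMF K) : overlap p q p' q' ≤ ⨆ p', ⨆ q', overlap p q p' q' := by
  have : Nonempty (PMF K) := ⟨p⟩
  refine le_ciSup_of_le ⟨1, ?_⟩ p' (le_ciSup (f := overlap p q p') ⟨1, ?_⟩ q')
  · exact Set.forall_mem_range.2 fun p' => ciSup_le (overlap_le_one p q p')
  · exact Set.forall_mem_range.2 (overlap_le_one p q p')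

lemma two_mul_overlap_le (p q p' q' : PMF K) {G : K → ℝ} (hG : ∀ k, |G k| ≤ 1) :
    2 * overlap p q p' q' ≤ expect p (fun k => (q' k).toReal * (1 - G k)) +
      expect q (fun k => (p' k).toReal * (1 + G k)) := by
  have hp := summable_toReal_mul p fun k => abs_toReal_mul_le q' (abs_one_sub_le_two (hG k)) k
  have hq := summable_toReal_mul q fun k => abs_toReal_mul_le p' (abs_one_add_le_two (hG k)) k
  rw [overlap, ← tsum_mul_left, expect, expect, ← hp.tsum_add hq]
  refine ((summable_overlap p q p' q').mul_left 2).tsum_le_tsum (fun k => ?_) (hp.add hq)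
  have hG1 := abs_le.1 (hG k)
  set m := min ((p k).toReal * (q' k).toReal) ((p' k).toReal * (q k).toReal)
  calc 2 * m = m * (1 - G k) + m * (1 + G k) := by ring
    _ ≤ (p k).toReal * (q' k).toReal * (1 - G k) + (p' k).toReal * (q k).toReal * (1 + G k) :=
      add_le_add (mul_le_mul_of_nonneg_right (min_le_left _ _) (by linarith))
        (mul_le_mul_of_nonneg_right (min_le_right _ _) (by linarith))
    _ = _ := by ring

lemma min_le_overlap_pure (p q : PMF K) (k : K) :
    min (p k).toReal (q k).toReal ≤ overlap p q (PMF.pure k) (PMF.pure k) := by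
  simpa only [overlap, PMF.pure_apply_self, ENNReal.toReal_one, mul_one, one_mul] using
    (summable_overlap p q (PMF.pure k) (PMF.pure k)).le_tsum k
      fun l _ => overlap_term_nonneg p q _ _ l

lemma exists_toReal_apply_eq {k l : K} (hkl : k ≠ l) {x y : ℝ} (hx : 0 ≤ x) (hy : 0 ≤ y)
    (hxy : x + y = 1) : ∃ μ : PMF K, (μ k).toReal = x ∧ (μ l).toReal = y := by
  classical
  let w (j : K) : ENNReal := if j = k then .ofReal x else if j = l then .ofReal y else 0
  refine ⟨PMF.ofFinset w {k, l} ?_ fun j hj => ?_, ?_, ?_⟩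
  · rw [Finset.sum_pair hkl]
    simp [w, hkl.symm, ← ENNReal.ofReal_add hx hy, hxy]
  · simp_all [w]
  · simp [w, hx]
  · simp [w, hkl.symm, hy]

lemma exists_add_le_overlap {p q : PMF K} {k l : K} (hkl : k ≠ l) {x y : ℝ} (hx : 0 ≤ x)
    (hy : 0 ≤ y) (hp : (p k).toReal * x + (p l).toReal * y = 1)
    (hq : (q k).toReal * x + (q l).toReal * y = 1) :
    ∃ p' q' : PMF K, (p k).toReal * (q k).toReal * x + (p l).toReal * (q l).toReal * y ≤
      overlap p q p' q' := by
  classical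
  obtain ⟨p', hp'k, hp'l⟩ := exists_toReal_apply_eq hkl (by positivity) (by positivity) hp
  obtain ⟨q', hq'k, hq'l⟩ := exists_toReal_apply_eq hkl (by positivity) (by positivity) hq
  refine ⟨p', q', ?_⟩
  have hpair := (summable_overlap p q p' q').sum_le_tsum {k, l}
    fun j _ => overlap_term_nonneg p q p' q' j
  have hterm (r s z : ℝ) : min (r * (s * z)) (r * z * s) = r * s * z := by
    rw [mul_right_comm, mul_assoc, min_self]
  rwa [Finset.sum_pair hkl, hp'k, hp'l, hq'k, hq'l, hterm, hterm] at hpair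

lemma add_le_mul_of_overlap_le {p q : PMF K} {M : ℝ} (hM : ∀ p' q', overlap p q p' q' ≤ M)
    {k l : K} (hk : (p k).toReal < (q k).toReal) (hl : (q l).toReal < (p l).toReal) :
    (p k).toReal * (q k).toReal * ((p l).toReal - (q l).toReal) +
        (p l).toReal * (q l).toReal * ((q k).toReal - (p k).toReal) ≤
      M * ((p l).toReal * (q k).toReal - (p k).toReal * (q l).toReal) := by
  have hkl : k ≠ l := by
    rintro rfl
    exact hk.not_gt hl
  set D := (p l).toReal * (q k).toReal - (p k).toReal * (q l).toReal
  have hD : 0 < D := sub_pos.2 <| mul_comm (q k).toReal (p l).toReal ▸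
    mul_lt_mul'' hk hl ENNReal.toReal_nonneg ENNReal.toReal_nonneg
  -- Cramer's rule for `p_k x + p_l y = 1`, `q_k x + q_l y = 1`.
  obtain ⟨p', q', h⟩ := exists_add_le_overlap (p := p) (q := q) hkl
    (div_nonneg (sub_nonneg.2 hl.le) hD.le) (div_nonneg (sub_nonneg.2 hk.le) hD.le)
    (by rw [mul_div_assoc', mul_div_assoc', ← add_div, div_eq_one_iff_eq hD.ne']; ring)
    (by rw [mul_div_assoc', mul_div_assoc', ← add_div, div_eq_one_iff_eq hD.ne']; ring)
  rw [mul_div_assoc', mul_div_assoc', ← add_div] at h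
  exact (div_le_iff₀ hD).1 (h.trans (hM p' q'))

/-- Helly's theorem on the line: each inequality confines `α` to a half-line, so solvability can be
checked on pairs. -/
lemma exists_mem_Icc_forall_le_mul {c d : K → ℝ} {M : ℝ} (hM : 0 ≤ M)
    (hlow : ∀ k, 0 < d k → c k ≤ M * d k) (hupp : ∀ k, d k ≤ 0 → c k ≤ 0)
    (hpair : ∀ k l, 0 < d k → d l < 0 → c l * d k ≤ c k * d l) :
    ∃ α ∈ Set.Icc 0 M, ∀ k, c k ≤ α * d k := by
  have hquot (k l : K) (hk : 0 < d k) (hl : d l < 0) : c k / d k ≤ c l / d l := by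
    rw [div_le_iff₀ hk, div_mul_eq_mul_div, le_div_iff_of_neg hl]
    exact hpair k l hk hl
  obtain ⟨α, hα, hα'⟩ := exists_between_of_forall_le
    (s := insert 0 ((fun k => c k / d k) '' {k | 0 < d k}))
    (t := insert M ((fun l => c l / d l) '' {l | d l < 0}))
    (Set.insert_nonempty _ _) (Set.insert_nonempty _ _) (by
      rintro _ (rfl | ⟨k, hk, rfl⟩) _ (rfl | ⟨l, hl, rfl⟩)
      exacts [hM, div_nonneg_of_nonpos (hupp l hl.le) hl.le, (div_le_iff₀ hk).2 (hlow k hk),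
        hquot k l hk hl])
  refine ⟨α, ⟨hα (.inl rfl), hα' (.inl rfl)⟩, fun k => ?_⟩
  rcases lt_trichotomy (d k) 0 with hk | hk | hk
  · exact (le_div_iff_of_neg hk).1 (hα' (.inr ⟨k, hk, rfl⟩))
  · simpa only [hk, mul_zero] using hupp k hk.le
  · exact (div_le_iff₀ hk).1 (hα (.inr ⟨k, hk, rfl⟩))

/-- With `β = M - α` the condition at `k` reads `p_k (q_k - M) ≤ α (q_k - p_k)`. The pairs that
matter in Helly's theorem are handled by `p'` and `q'` supported on two states. -/
lemma exists_dual_weights {p q : PMF K} {M : ℝ} (hM : ∀ p' q', overlap p q p' q' ≤ M) :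
    ∃ α β : ℝ, 0 ≤ α ∧ 0 ≤ β ∧ α + β = M ∧
      ∀ k, (p k).toReal * (q k).toReal ≤ α * (q k).toReal + β * (p k).toReal := by
  have hmin (k : K) : min (p k).toReal (q k).toReal ≤ M :=
    (min_le_overlap_pure p q k).trans (hM _ _)
  obtain ⟨α, hα, h⟩ := exists_mem_Icc_forall_le_mul
    (c := fun k => (p k).toReal * ((q k).toReal - M)) (d := fun k => (q k).toReal - (p k).toReal)
    ((overlap_nonneg p q p q).trans (hM p q))
    (fun k hk => by
      have hpM : (p k).toReal ≤ M := min_eq_left (sub_pos.1 hk).le ▸ hmin k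
      linarith [mul_le_mul_of_nonneg_right hpM (ENNReal.toReal_nonneg (a := q k))])
    (fun k hk => by
      have hqM : (q k).toReal ≤ M := min_eq_right (sub_nonpos.1 hk) ▸ hmin k
      exact mul_nonpos_of_nonneg_of_nonpos ENNReal.toReal_nonneg (sub_nonpos.2 hqM))
    (fun k l hk hl => by
      linarith [add_le_mul_of_overlap_le hM (sub_pos.1 hk) (sub_neg.1 hl)])
  exact ⟨α, M - α, hα.1, sub_nonneg.2 hα.2, add_sub_cancel α M, fun k => by linarith [h k]⟩

lemma exists_mul_one_sub_le {x y α β : ℝ} (hα : 0 ≤ α) (hβ : 0 ≤ β)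
    (h : x * y ≤ α * y + β * x) :
    ∃ t : ℝ, |t| ≤ 1 ∧ x * (1 - t) ≤ 2 * α ∧ y * (1 + t) ≤ 2 * β := by
  rcases le_or_gt x α with hx | hx
  · exact ⟨-1, by simp, by linarith, by simpa using hβ⟩
  have hx0 : 0 < x := hα.trans_lt hx
  have hαx : α / x ≤ 1 := (div_le_one hx0).2 hx.le
  have hαx0 : 0 ≤ α / x := div_nonneg hα hx0.le
  refine ⟨1 - 2 * (α / x), abs_le.2 ⟨by linarith, by linarith⟩, ?_, ?_⟩
  · refine le_of_eq ?_
    field_simp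
    ring
  · have hy : y * (1 + (1 - 2 * (α / x))) = 2 * ((x * y - α * y) / x) := by
      field_simp
      ring
    rw [hy]
    gcongr
    rw [div_le_iff₀ hx0]
    linarith

end Overlap

section Diameter

open Filter Topology

variable {K : Type}

/-- Player 1 in `v` imitates his average behavior in `u` at a state drawn from `p'`, and player 2 in
`u` imitates his average behavior in `v` at a state drawn from `q'`. The true and the imitated state
are both `k` with probability `p_k q'_k` in `u` and `q_k p'_k` in `v`, and the expected payoffs are
then the same. -/
lemma val_sub_val_le_of_overlap (u v : InfoStruct K) (p' q' : PMF K) {g : K → ℕ → ℕ → ℝ}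
    (hg : IsPayoff g) :
    val u g - val v g ≤ 2 * (1 - overlap (margK u) (margK v) p' q') := by
  refine val_sub_val_le hg fun σ => ?_
  obtain ⟨a, ha⟩ := exists_payoff_const_right_eq u σ
  refine ⟨fun _ => p'.bind a, fun τ => ?_⟩
  obtain ⟨b, hb⟩ := exists_payoff_const_left_eq v τ
  refine ⟨fun _ => q'.bind b, ?_⟩
  have hab (k l : K) : |mixedPayoff (g k) (a k) (b l)| ≤ 1 := hg.abs_mixedPayoff_le _ _ _
  have hab' (k l : K) : |mixedPayoff (g k) (a l) (b k)| ≤ 1 := hg.abs_mixedPayoff_le _ _ _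
  have hu : payoff u g σ (fun _ => q'.bind b) ≤ 1 - expect (margK u) fun k =>
      (q' k).toReal * (1 - mixedPayoff (g k) (a k) (b k)) := by
    rw [ha hg]
    simp only [mixedPayoff_bind_right (hg.abs_apply_le _)]
    exact expect_expect_le_one_sub (margK u) q' hab
  have hv : -1 + (expect (margK v) fun k =>
      (p' k).toReal * (1 + mixedPayoff (g k) (a k) (b k))) ≤
      payoff v g (fun _ => p'.bind a) τ := by
    rw [hb hg]
    simp only [mixedPayoff_bind_left (hg.abs_apply_le _)]
    exact neg_one_add_le_expect_expect (margK v) p' hab'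
  linarith [two_mul_overlap_le (margK u) (margK v) p' q' fun k => hab k k]

theorem dVal_le_iSup_overlap (u v : InfoStruct K) :
    dVal u v ≤ 2 * (1 - ⨆ p', ⨆ q', overlap (margK u) (margK v) p' q') := by
  have : Nonempty (PMF K) := ⟨margK u⟩
  have hle (p' q' : PMF K) : dVal u v ≤ 2 * (1 - overlap (margK u) (margK v) p' q') :=
    dVal_le fun g hg => abs_sub_le_iff.2 ⟨val_sub_val_le_of_overlap u v p' q' hg,
      overlap_comm (margK u) (margK v) p' q' ▸ val_sub_val_le_of_overlap v u q' p' hg⟩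
  have hsup : ⨆ p', ⨆ q', overlap (margK u) (margK v) p' q' ≤ 1 - dVal u v / 2 :=
    ciSup_le fun p' => ciSup_le fun q' => by linarith [hle p' q']
  linarith

/-- The labels are unbounded when `K` is infinite, so the bound is approached by the guessing games
with `N → ∞` admissible actions. -/
theorem le_dVal_of_overlap_le {p q : PMF K} {M : ℝ} (hM : ∀ p' q', overlap p q p' q' ≤ M)
    {ι : K → ℕ} (hι : Function.Injective ι) :
    2 * (1 - M) ≤
      dVal (deterministicSignals p ι fun _ => 0) (deterministicSignals q (fun _ => 0) ι) := by
  obtain ⟨α, β, hα, hβ, rfl, hαβ⟩ := exists_dual_weights hM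
  choose t ht htp htq using fun k => exists_mul_one_sub_le hα hβ (hαβ k)
  have htail (μ : PMF K) :
      Tendsto (fun N => expect μ fun k => if N ≤ ι k then (2 : ℝ) else 0) atTop (𝓝 0) := by
    have h := tendsto_expect μ (l := atTop) (C := 2)
      (F := fun N k => if N ≤ ι k then (2 : ℝ) else 0) (f := fun _ => 0)
      (fun N k => by split_ifs <;> norm_num)
      fun k => tendsto_const_nhds.congr' <| (eventually_gt_atTop (ι k)).mono fun N hN =>
        (if_neg hN.not_ge).symm
    rwa [expect_const] at h
  have hlim := ((htail p).add (htail q)).const_sub (2 * (1 - (α + β)))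
  rw [add_zero, sub_zero] at hlim
  refine le_of_tendsto' hlim fun N => ?_
  have hp := le_val_guessingGame (N := N) hι ht p (by positivity) htp
  have hq := val_guessingGame_le (N := N) hι ht q (by positivity) htq
  linarith [val_sub_val_le_dVal (deterministicSignals p ι fun _ => 0)
    (deterministicSignals q (fun _ => 0) ι) (isPayoff_guessingGame (N := N) (ι := ι) ht)]

theorem diameter_bounds_general [Countable K] (p q : PMF K) :
    IsLeast {r : ℝ | ∃ u v : InfoStruct K, margK u = p ∧ margK v = q ∧ r = dVal u v} (tv p q) ∧
    IsGreatest {r : ℝ | ∃ u v : InfoStruct K, margK u = p ∧ margK v = q ∧ r = dVal u v}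
      (2 * (1 - ⨆ p' : PMF K, ⨆ q' : PMF K, overlap p q p' q')) := by
  obtain ⟨ι, hι⟩ := Countable.exists_injective_nat K
  refine ⟨⟨⟨deterministicSignals p 0 0, deterministicSignals q 0 0, by simp, by simp, ?_⟩, ?_⟩,
    ⟨⟨deterministicSignals p ι fun _ => 0, deterministicSignals q (fun _ => 0) ι, by simp, by simp,
      ?_⟩, ?_⟩⟩
  · refine le_antisymm ?_ (dVal_deterministicSignals_le_tv p q 0 0)
    simpa using tv_margK_le_dVal (deterministicSignals p 0 0) (deterministicSignals q 0 0)
  · rintro r ⟨u, v, rfl, rfl, rfl⟩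
    exact tv_margK_le_dVal u v
  · refine le_antisymm (le_dVal_of_overlap_le (overlap_le_iSup p q) hι) ?_
    simpa using dVal_le_iSup_overlap (deterministicSignals p ι fun _ => 0)
      (deterministicSignals q (fun _ => 0) ι)
  · rintro r ⟨u, v, rfl, rfl, rfl⟩
    exact dVal_le_iSup_overlap u v

end Diameter

/-- Bounds on the distance between information structures with fixed marginals
`p` and `q` over the state: the minimum of `d(u,v)` is `Σ_k |p_k − q_k|` and the
maximum is `2·(1 − max_{p',q' ∈ Δ(K)} Σ_k min(p_k·q'_k, p'_k·q_k))`. -/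
theorem diameter_bounds (K : Type) [Fintype K] (hK : 2 ≤ Fintype.card K)
    (p q : PMF K) :
    IsLeast {r : ℝ | ∃ u v : InfoStruct K, margK u = p ∧ margK v = q ∧ r = dVal u v}
      (∑ k : K, |(p k).toReal - (q k).toReal|) ∧
    IsGreatest {r : ℝ | ∃ u v : InfoStruct K, margK u = p ∧ margK v = q ∧ r = dVal u v}
      (2 * (1 - ⨆ p' : PMF K, ⨆ q' : PMF K,
        ∑ k : K, min ((p k).toReal * (q' k).toReal) ((p' k).toReal * (q k).toReal))) := by
  simpa only [tv, overlap, tsum_fintype] using diameter_bounds_general p q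

end ValueDistance
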